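/- Let n ≥ 2 and let M be an n×n matrix over a commutative ring. Then the coefficient of X^{n−2} in the characteristic polynomial det(XI − M) equals Σ_{i<j} (M_{ii}M_{jj} − M_{ij}M_{ji}), the sum of all 2×2 principal minors of M. -/

import Mathlib

/-!
The coefficient of `X^(n-k)` in `det(XI - M)` is `(-1)^k` times the sum of the `k × k` principal
minors of `M`, indexed by the `k`-element sets of indices. For `k = 2` every such set is `{i, j}`
for exactly one pair `i < j`.
-/

open Polynomial

theorem sum_powersetCard_two_eq_sum_lt {ι A : Type*} [LinearOrder ι] [AddCommMonoid A]
    (t : Finset ι) (f : Finset ι → A) :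
    ∑ s ∈ t.powersetCard 2, f s = ∑ i ∈ t, ∑ j ∈ t with i < j, f {i, j} := by
  rw [Finset.sum_sigma']
  symm
  refine Finset.sum_bij (fun p _ ↦ {p.1, p.2}) ?maps_to ?injective ?surjective fun _ _ ↦ rfl
  case maps_to =>
    rintro ⟨i, j⟩ hp
    obtain ⟨hi, hj, hij⟩ : i ∈ t ∧ j ∈ t ∧ i < j := by simpa using hp
    simp [Finset.mem_powersetCard, Finset.insert_subset_iff, hi, hj, Finset.card_pair hij.ne]
  case injective =>
    rintro ⟨i, j⟩ hp ⟨k, l⟩ hq (hpair : ({i, j} : Finset ι) = {k, l})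
    have hij : i < j := (Finset.mem_filter.mp (Finset.mem_sigma.mp hp).2).2
    have hkl : k < l := (Finset.mem_filter.mp (Finset.mem_sigma.mp hq).2).2
    have hends : i = k ∧ j = l ∨ i = l ∧ j = k := by
      rw [← Set.pair_eq_pair_iff, ← Finset.coe_pair, ← Finset.coe_pair, hpair]
    obtain ⟨rfl, rfl⟩ | ⟨rfl, rfl⟩ := hends
    · rfl
    · exact absurd hij hkl.asymm
  case surjective =>
    intro s hs
    obtain ⟨hst, hcard⟩ := Finset.mem_powersetCard.mp hs
    obtain ⟨i, j, hij, rfl⟩ := Finset.card_eq_two.mp hcard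
    obtain ⟨hi, hj⟩ : i ∈ t ∧ j ∈ t := by simpa [Finset.insert_subset_iff] using hst
    obtain hlt | hgt := hij.lt_or_gt
    · exact ⟨⟨i, j⟩, by simp [hi, hj, hlt], rfl⟩
    · exact ⟨⟨j, i⟩, by simp [hi, hj, hgt], Finset.pair_comm j i⟩

theorem det_submatrix_pair {ι R : Type*} [DecidableEq ι] [CommRing R] (M : Matrix ι ι R)
    {i j : ι} (hij : i ≠ j) :
    (M.submatrix (Subtype.val : ({i, j} : Finset ι) → ι) Subtype.val).det
      = M i i * M j j - M i j * M j i := by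
  let e : Fin 2 → ({i, j} : Finset ι) := ![⟨i, by simp⟩, ⟨j, by simp⟩]
  have he : Function.Bijective e := by
    refine (Fintype.bijective_iff_surjective_and_card e).mpr ⟨?_, by simp [Finset.card_pair hij]⟩
    rintro ⟨k, hk⟩
    obtain rfl | rfl : k = i ∨ k = j := by simpa using hk
    exacts [⟨0, rfl⟩, ⟨1, rfl⟩]
  rw [← Matrix.det_submatrix_equiv_self (Equiv.ofBijective e he), Matrix.det_fin_two]
  rfl

theorem charpoly_coeff_sub_two_general {ι R : Type*} [Fintype ι] [LinearOrder ι] [CommRing R]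
    (hι : 2 ≤ Fintype.card ι) (M : Matrix ι ι R) :
    M.charpoly.coeff (Fintype.card ι - 2)
      = ∑ i, ∑ j, if i < j then M i i * M j j - M i j * M j i else 0 := by
  let minor (s : Finset ι) : R := (M.submatrix (Subtype.val : s → ι) Subtype.val).det
  calc M.charpoly.coeff (Fintype.card ι - 2)
    _ = ∑ s ∈ Finset.univ.powersetCard 2, minor s := by
      rw [M.charpoly_coeff_eq_sum_minors 2 hι, neg_one_sq, one_mul]
    _ = ∑ i, ∑ j with i < j, minor {i, j} := sum_powersetCard_two_eq_sum_lt _ _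
    _ = ∑ i, ∑ j with i < j, (M i i * M j j - M i j * M j i) :=
      Finset.sum_congr rfl fun i _ ↦ Finset.sum_congr rfl fun j hj ↦
        det_submatrix_pair M (Finset.mem_filter.mp hj).2.ne
    _ = ∑ i, ∑ j, if i < j then M i i * M j j - M i j * M j i else 0 := by
      simp only [Finset.sum_filter]

/-- For `n ≥ 2` and an `n × n` matrix `M` over a commutative ring, the coefficient of
`X^(n-2)` in the characteristic polynomial `det(XI - M)` equals the sum of all `2 × 2`
principal minors `Σ_{i<j} (M_{ii}M_{jj} - M_{ij}M_{ji})`. -/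
theorem charpoly_coeff_sub_two
    (n : ℕ) (hn : 2 ≤ n) (R : Type*) [CommRing R]
    (M : Matrix (Fin n) (Fin n) R) :
    M.charpoly.coeff (n - 2)
      = ∑ i : Fin n, ∑ j : Fin n, if i < j then M i i * M j j - M i j * M j i else 0 := by
  simpa only [Fintype.card_fin] using charpoly_coeff_sub_two_general (by simpa using hn) M
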